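/- arXiv:2304.02406 — 2 statements merged into one kernel-verified Lean document; each statement's English description precedes it below -/
import Mathlib

section
/- (Dual-phase driving force.) Let ψ_α, ψ_β : M_d(ℝ) → ℝ be differentiable, F a d×d matrix, a ∈ ℝ^d, and n̂ ∈ ℝ^d a unit vector. For (x, y) with x + y ≠ 0 define g(x, y) = x·ψ_α(F − (y/(x+y)) a ⊗ n̂) + y·ψ_β(F + (x/(x+y)) a ⊗ n̂). Then at any point (φ_α, φ_β) with φ_α + φ_β = 1 and φ_α, φ_β > 0: ∂g/∂y − ∂g/∂x = ψ_β(F_{βα}) − ψ_α(F_{αβ}) − ⟨φ_α P_α + φ_β P_β, a ⊗ n̂⟩, where F_{αβ} = F − φ_β a ⊗ n̂, F_{βα} = F + φ_α a ⊗ n̂, P_α = Dψ_α(F_{αβ}), P_β = Dψ_β(F_{βα}); moreover, with P = φ_α P_α + φ_β P_β, ⟨P, a ⊗ n̂⟩ = (P n̂)·a = (P n̂)·(⟦F⟧ n̂) where ⟦F⟧ = F_{βα} − F_{αβ} = a ⊗ n̂. Hence the elastic driving force of a dual-phase material is ΔG^{elas}_{αβ} = ⟦ψ^{elas}⟧_{αβ}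 − (P·n̂)·(⟦F⟧_{αβ}·n̂). -/
open Matrix

attribute [local instance] Matrix.normedAddCommGroup Matrix.normedSpace

/-- The Frobenius inner product `⟨A, B⟩ = tr (A Bᵀ)`. -/
noncomputable def frob {d : ℕ} (A B : Matrix (Fin d) (Fin d) ℝ) : ℝ := (A * Bᵀ).trace

/-- The two-variable effective elastic energy of a dual-phase material:
`g(x, y) = x ψ_α(F − (y/(x+y)) a⊗n̂) + y ψ_β(F + (x/(x+y)) a⊗n̂)`. -/
noncomputable def dualEnergy {d : ℕ} (ψα ψβ : Matrix (Fin d) (Fin d) ℝ → ℝ)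
    (F : Matrix (Fin d) (Fin d) ℝ) (a nh : Fin d → ℝ) (x y : ℝ) : ℝ :=
  x * ψα (F - (y / (x + y)) • vecMulVec a nh)
    + y * ψβ (F + (x / (x + y)) • vecMulVec a nh)

/-!
As `g` is totally differentiable at `(φ_α, φ_β)`, the difference `∂g/∂y − ∂g/∂x` is its
derivative in the direction `(-1, 1)`. This direction keeps `x + y = 1` fixed, so along it the
volume fractions vary affinely and both phase deformation gradients move with the same velocity
`−a ⊗ n̂`. The product rule and the chain rule then give the energy jump minus the averaged stress
paired with `a ⊗ n̂`.
-/

section DrivingForce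

variable {𝕜 E V : Type*} [NontriviallyNormedField 𝕜] [NormedAddCommGroup E] [NormedSpace 𝕜 E]
  [NormedAddCommGroup V] [NormedSpace 𝕜 V]

theorem deriv_snd_sub_deriv_fst_eq_lineDeriv {f : 𝕜 × 𝕜 → V} {x y : 𝕜}
    (hf : DifferentiableAt 𝕜 f (x, y)) :
    deriv (fun t => f (x, t)) y - deriv (fun s => f (s, y)) x
      = lineDeriv 𝕜 f (x, y) (-1, 1) := by
  have hsnd : HasDerivAt (fun t => f (x, t)) (fderiv 𝕜 f (x, y) (0, 1)) y :=
    hf.hasFDerivAt.comp_hasDerivAt y ((hasDerivAt_const y x).prodMk (hasDerivAt_id y))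
  have hfst : HasDerivAt (fun s => f (s, y)) (fderiv 𝕜 f (x, y) (1, 0)) x :=
    hf.hasFDerivAt.comp_hasDerivAt x ((hasDerivAt_id x).prodMk (hasDerivAt_const x y))
  rw [hsnd.deriv, hfst.deriv, hf.lineDeriv_eq_fderiv, ← map_sub, Prod.mk_sub_mk, zero_sub,
    sub_zero]

/-- The energy of a mixture of two phases in amounts `p = (x, y)`, whose states differ by the jump
`J` and average to `F`. It is the energy `dualEnergy` with `a ⊗ n̂` replaced by an arbitrary vector
`J`, as a function on the product so that its total derivative is available. -/
def mixtureEnergy (ψα ψβ : E → V) (F J : E) (p : 𝕜 × 𝕜) : V :=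
  p.1 • ψα (F - (p.2 / (p.1 + p.2)) • J) + p.2 • ψβ (F + (p.1 / (p.1 + p.2)) • J)

variable {ψα ψβ : E → V} {F J : E} {x y : 𝕜}

theorem differentiableAt_mixtureEnergy (hxy : x + y ≠ 0)
    (hα : DifferentiableAt 𝕜 ψα (F - (y / (x + y)) • J))
    (hβ : DifferentiableAt 𝕜 ψβ (F + (x / (x + y)) • J)) :
    DifferentiableAt 𝕜 (mixtureEnergy ψα ψβ F J) (x, y) := by
  have hfracα : DifferentiableAt 𝕜 (fun p : 𝕜 × 𝕜 => p.1 / (p.1 + p.2)) (x, y) := by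
    fun_prop (disch := exact hxy)
  have hfracβ : DifferentiableAt 𝕜 (fun p : 𝕜 × 𝕜 => p.2 / (p.1 + p.2)) (x, y) := by
    fun_prop (disch := exact hxy)
  exact (differentiableAt_fst.smul (hα.comp (x, y) ((hfracβ.smul_const J).const_sub F))).add
    (differentiableAt_snd.smul (hβ.comp (x, y) ((hfracα.smul_const J).const_add F)))

theorem mixtureEnergy_add_smul_neg_one_one (ψα ψβ : E → V) (F J : E) (x y t : 𝕜) :
    mixtureEnergy ψα ψβ F J ((x, y) + t • (-1, 1))
      = (x - t) • ψα (F - (y / (x + y)) • J + t • -((x + y)⁻¹ • J))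
        + (y + t) • ψβ (F + (x / (x + y)) • J + t • -((x + y)⁻¹ • J)) := by
  have hamounts : (x, y) + t • ((-1, 1) : 𝕜 × 𝕜) = (x - t, y + t) := by
    ext <;> simp [sub_eq_add_neg]
  have htotal : x - t + (y + t) = x + y := by ring
  simp only [mixtureEnergy, hamounts, htotal]
  congr 3 <;> module

theorem hasLineDerivAt_mixtureEnergy
    (hα : DifferentiableAt 𝕜 ψα (F - (y / (x + y)) • J))
    (hβ : DifferentiableAt 𝕜 ψβ (F + (x / (x + y)) • J)) :
    HasLineDerivAt 𝕜 (mixtureEnergy ψα ψβ F J)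
      (ψβ (F + (x / (x + y)) • J) - ψα (F - (y / (x + y)) • J)
        - (x + y)⁻¹ • (x • fderiv 𝕜 ψα (F - (y / (x + y)) • J) J
          + y • fderiv 𝕜 ψβ (F + (x / (x + y)) • J) J)) (x, y) (-1, 1) := by
  have hlineα := hα.hasFDerivAt.hasLineDerivAt (-((x + y)⁻¹ • J))
  have hlineβ := hβ.hasFDerivAt.hasLineDerivAt (-((x + y)⁻¹ • J))
  have hamountα : HasDerivAt (fun t => x - t) (-1) 0 := (hasDerivAt_id 0).const_sub x
  have hamountβ : HasDerivAt (fun t => y + t) 1 0 := (hasDerivAt_id 0).const_add y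
  have hproduct := (hamountα.smul hlineα).add (hamountβ.smul hlineβ)
  unfold HasLineDerivAt
  simp only [mixtureEnergy_add_smul_neg_one_one]
  refine hproduct.congr_deriv ?_
  simp only [zero_smul, add_zero, sub_zero, map_neg, map_smul]
  module

theorem deriv_mixtureEnergy_snd_sub_deriv_fst (hxy : x + y ≠ 0)
    (hα : DifferentiableAt 𝕜 ψα (F - (y / (x + y)) • J))
    (hβ : DifferentiableAt 𝕜 ψβ (F + (x / (x + y)) • J)) :
    deriv (fun t => mixtureEnergy ψα ψβ F J (x, t)) y
        - deriv (fun s => mixtureEnergy ψα ψβ F J (s, y)) x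
      = ψβ (F + (x / (x + y)) • J) - ψα (F - (y / (x + y)) • J)
        - (x + y)⁻¹ • (x • fderiv 𝕜 ψα (F - (y / (x + y)) • J) J
          + y • fderiv 𝕜 ψβ (F + (x / (x + y)) • J) J) :=
  (deriv_snd_sub_deriv_fst_eq_lineDeriv (differentiableAt_mixtureEnergy hxy hα hβ)).trans
    (hasLineDerivAt_mixtureEnergy hα hβ).lineDeriv

theorem deriv_mixtureEnergy_snd_sub_deriv_fst_of_add_eq_one (hxy : x + y = 1)
    (hα : DifferentiableAt 𝕜 ψα (F - y • J)) (hβ : DifferentiableAt 𝕜 ψβ (F + x • J)) :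
    deriv (fun t => mixtureEnergy ψα ψβ F J (x, t)) y
        - deriv (fun s => mixtureEnergy ψα ψβ F J (s, y)) x
      = ψβ (F + x • J) - ψα (F - y • J)
        - (x • fderiv 𝕜 ψα (F - y • J) J + y • fderiv 𝕜 ψβ (F + x • J) J) := by
  have hne : x + y ≠ 0 := by rw [hxy]; exact one_ne_zero
  simpa only [hxy, div_one, inv_one, one_smul] using
    deriv_mixtureEnergy_snd_sub_deriv_fst (F := F) (J := J) hne
      (by rwa [hxy, div_one]) (by rwa [hxy, div_one])

end DrivingForce

section Frobenius

variable {d : ℕ}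

theorem frob_add_left (A B C : Matrix (Fin d) (Fin d) ℝ) :
    frob (A + B) C = frob A C + frob B C := by
  rw [frob, Matrix.add_mul, trace_add, frob, frob]

theorem frob_smul_left (c : ℝ) (A B : Matrix (Fin d) (Fin d) ℝ) :
    frob (c • A) B = c * frob A B := by
  rw [frob, Matrix.smul_mul, trace_smul, smul_eq_mul, frob]

theorem frob_vecMulVec (P : Matrix (Fin d) (Fin d) ℝ) (a n : Fin d → ℝ) :
    frob P (vecMulVec a n) = P *ᵥ n ⬝ᵥ a := by
  rw [frob, transpose_vecMulVec, mul_vecMulVec, trace_vecMulVec]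

end Frobenius

theorem vecMulVec_mulVec_of_dotProduct_eq_one {m n R : Type*} [Fintype n] [CommSemiring R]
    {u v : n → R} (a : m → R) (huv : u ⬝ᵥ v = 1) : vecMulVec a u *ᵥ v = a := by
  rw [vecMulVec_mulVec, huv, MulOpposite.op_one, one_smul]

theorem add_smul_sub_sub_smul_of_add_eq_one {R M : Type*} [Ring R] [AddCommGroup M] [Module R M]
    {x y : R} (hxy : x + y = 1) (F J : M) : (F + x • J) - (F - y • J) = J := by
  rw [add_sub_sub_cancel, ← add_smul, hxy, one_smul]

theorem dual_phase_driving_force_general {d : ℕ}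
    (ψα ψβ : Matrix (Fin d) (Fin d) ℝ → ℝ)
    (F : Matrix (Fin d) (Fin d) ℝ) (a nh : Fin d → ℝ) (hnh : nh ⬝ᵥ nh = 1)
    (φα φβ : ℝ) (hsum : φα + φβ = 1)
    (hψα : DifferentiableAt ℝ ψα (F - φβ • vecMulVec a nh))
    (hψβ : DifferentiableAt ℝ ψβ (F + φα • vecMulVec a nh))
    (Pα Pβ : Matrix (Fin d) (Fin d) ℝ)
    (hPα : ∀ H, fderiv ℝ ψα (F - φβ • vecMulVec a nh) H = frob Pα H)
    (hPβ : ∀ H, fderiv ℝ ψβ (F + φα • vecMulVec a nh) H = frob Pβ H) :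
    (deriv (fun y => dualEnergy ψα ψβ F a nh φα y) φβ
        - deriv (fun x => dualEnergy ψα ψβ F a nh x φβ) φα
      = ψβ (F + φα • vecMulVec a nh) - ψα (F - φβ • vecMulVec a nh)
          - frob (φα • Pα + φβ • Pβ) (vecMulVec a nh)) ∧
    frob (φα • Pα + φβ • Pβ) (vecMulVec a nh)
      = ((φα • Pα + φβ • Pβ).mulVec nh) ⬝ᵥ a ∧
    ((φα • Pα + φβ • Pβ).mulVec nh) ⬝ᵥ a
      = ((φα • Pα + φβ • Pβ).mulVec nh) ⬝ᵥ
          (((F + φα • vecMulVec a nh) - (F - φβ • vecMulVec a nh)).mulVec nh) := by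
  refine ⟨?_, frob_vecMulVec _ a nh, ?_⟩
  · rw [frob_add_left, frob_smul_left, frob_smul_left, ← hPα, ← hPβ]
    exact deriv_mixtureEnergy_snd_sub_deriv_fst_of_add_eq_one hsum hψα hψβ
  · rw [add_smul_sub_sub_smul_of_add_eq_one hsum, vecMulVec_mulVec_of_dotProduct_eq_one a hnh]

/-- dual-phase driving force: at `(φ_α, φ_β)` with `φ_α + φ_β = 1`,
`∂g/∂y − ∂g/∂x = ψ_β(F_{βα}) − ψ_α(F_{αβ}) − ⟨φ_α P_α + φ_β P_β, a ⊗ n̂⟩`; moreover with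
`P = φ_α P_α + φ_β P_β`, `⟨P, a ⊗ n̂⟩ = (P n̂)·a = (P n̂)·(⟦F⟧ n̂)`. Hence the elastic
driving force is `ΔG = ⟦ψ⟧ − (P·n̂)·(⟦F⟧·n̂)`. -/
theorem dual_phase_driving_force {d : ℕ}
    (ψα ψβ : Matrix (Fin d) (Fin d) ℝ → ℝ)
    (hψα : Differentiable ℝ ψα) (hψβ : Differentiable ℝ ψβ)
    (F : Matrix (Fin d) (Fin d) ℝ) (a nh : Fin d → ℝ) (hnh : nh ⬝ᵥ nh = 1)
    (φα φβ : ℝ) (hsum : φα + φβ = 1) (hφα : 0 < φα) (hφβ : 0 < φβ)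
    (Pα Pβ : Matrix (Fin d) (Fin d) ℝ)
    (hPα : ∀ H, fderiv ℝ ψα (F - φβ • vecMulVec a nh) H = frob Pα H)
    (hPβ : ∀ H, fderiv ℝ ψβ (F + φα • vecMulVec a nh) H = frob Pβ H) :
    (deriv (fun y => dualEnergy ψα ψβ F a nh φα y) φβ
        - deriv (fun x => dualEnergy ψα ψβ F a nh x φβ) φα
      = ψβ (F + φα • vecMulVec a nh) - ψα (F - φβ • vecMulVec a nh)
          - frob (φα • Pα + φβ • Pβ) (vecMulVec a nh)) ∧
    frob (φα • Pα + φβ • Pβ) (vecMulVec a nh)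
      = ((φα • Pα + φβ • Pβ).mulVec nh) ⬝ᵥ a ∧
    ((φα • Pα + φβ • Pβ).mulVec nh) ⬝ᵥ a
      = ((φα • Pα + φβ • Pβ).mulVec nh) ⬝ᵥ
          (((F + φα • vecMulVec a nh) - (F - φβ • vecMulVec a nh)).mulVec nh) :=
  dual_phase_driving_force_general ψα ψβ F a nh hnh φα φβ hsum (hψα _) (hψβ _) Pα Pβ hPα hPβ
end

section
/- (The stationarity of the pairwise interface energy is equivalent to both jump conditions for Hooke materials.) Fix φ_α, φ_β > 0 with s = φ_α + φ_β, a symmetric d×d matrix G, a unit vector n̂ ∈ ℝ^d, stiffness tensors C_α, C_β and symmetric Bain strains ε_α^B, ε_β^B. For a ∈ ℝ^d set ε_{αβ}(a) = s⁻¹[G − φ_β (a ⊗ n̂)ˢʸᵐ], ε_{βα}(a) = s⁻¹[G + φ_α (a ⊗ n̂)ˢʸᵐ], σ_{αβ}(a) = C_α(ε_{αβ}(a) − ε_α^B), σ_{βα}(a) = C_β(ε_{βα}(a) − ε_β^B), and E(a) = (φ_α/s)·½⟨ε_{αβ}(a) − ε_α^B, σ_{αβ}(a)⟩ + (φ_β/s)·½⟨ε_{βα}(a)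 − ε_β^B, σ_{βα}(a)⟩. Then a vector a minimizes E if and only if σ_{αβ}(a) n̂ = σ_{βα}(a) n̂; and for every a, the pair (ε_{αβ}(a), ε_{βα}(a)) automatically satisfies the kinematic compatibility (Hadamard) condition ε_{βα}(a) − ε_{αβ}(a) = (a ⊗ n̂)ˢʸᵐ together with the average constraint φ_α ε_{αβ}(a) + φ_β ε_{βα}(a) = G. Thus partial rank-one relaxation of the pairwise energy satisfies simultaneously the static equilibrium and kinematic compatibility conditions on the pairwise interface. -/
open Matrix

/-- The symmetric part `Aˢʸᵐ = (A + Aᵀ)/2`. -/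
noncomputable def symPart {d : ℕ} (A : Matrix (Fin d) (Fin d) ℝ) :
    Matrix (Fin d) (Fin d) ℝ := (1 / 2 : ℝ) • (A + Aᵀ)

/-- A stiffness tensor: self-adjoint for the Frobenius inner product, `C A = C(Aˢʸᵐ)`
symmetric for every `A`, and positive definite on nonzero symmetric matrices. -/
def IsStiffness {d : ℕ}
    (C : Matrix (Fin d) (Fin d) ℝ →ₗ[ℝ] Matrix (Fin d) (Fin d) ℝ) : Prop :=
  (∀ A B, frob (C A) B = frob A (C B)) ∧
  (∀ A, C A = C (symPart A)) ∧
  (∀ A, (C A)ᵀ = C A) ∧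
  (∀ S : Matrix (Fin d) (Fin d) ℝ, Sᵀ = S → S ≠ 0 → 0 < frob S (C S))

/-- The pairwise phase-field strain `ε_{αβ}(a) = s⁻¹[G − φ_β (a ⊗ n̂)ˢʸᵐ]`. -/
noncomputable def strainAB {d : ℕ} (φα φβ : ℝ) (G : Matrix (Fin d) (Fin d) ℝ)
    (nh a : Fin d → ℝ) : Matrix (Fin d) (Fin d) ℝ :=
  (φα + φβ)⁻¹ • (G - φβ • symPart (vecMulVec a nh))

/-- The pairwise phase-field strain `ε_{βα}(a) = s⁻¹[G + φ_α (a ⊗ n̂)ˢʸᵐ]`. -/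
noncomputable def strainBA {d : ℕ} (φα φβ : ℝ) (G : Matrix (Fin d) (Fin d) ℝ)
    (nh a : Fin d → ℝ) : Matrix (Fin d) (Fin d) ℝ :=
  (φα + φβ)⁻¹ • (G + φα • symPart (vecMulVec a nh))

/-- The pairwise interface energy
`E(a) = (φ_α/s)·½⟨ε_{αβ}(a) − ε_α^B, σ_{αβ}(a)⟩ + (φ_β/s)·½⟨ε_{βα}(a) − ε_β^B, σ_{βα}(a)⟩`. -/
noncomputable def pairE {d : ℕ}
    (Cα Cβ : Matrix (Fin d) (Fin d) ℝ →ₗ[ℝ] Matrix (Fin d) (Fin d) ℝ)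
    (εαB εβB : Matrix (Fin d) (Fin d) ℝ) (φα φβ : ℝ)
    (G : Matrix (Fin d) (Fin d) ℝ) (nh a : Fin d → ℝ) : ℝ :=
  (φα / (φα + φβ)) * ((1 / 2) *
      frob (strainAB φα φβ G nh a - εαB) (Cα (strainAB φα φβ G nh a - εαB)))
    + (φβ / (φα + φβ)) * ((1 / 2) *
      frob (strainBA φα φβ G nh a - εβB) (Cβ (strainBA φα φβ G nh a - εβB)))

/-!
Perturbing `a` by `h` moves the two strains by opposite multiples of `W = (h ⊗ n̂)ˢʸᵐ`, so
`E (a + h) = E a + k (h · j) + (k / 2) ⟨W, C̄ W⟩`, where `k = φ_α φ_β / s²`,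
`j = σ_{βα}(a) n̂ − σ_{αβ}(a) n̂` is the traction jump and `C̄ = (φ_β C_α + φ_α C_β) / s`. Since the
quadratic term is nonnegative, `a` is a minimizer exactly when the linear term vanishes, that is,
when `j = 0`.
-/

theorem forall_le_iff_linear_part_eq_zero {𝕜 V : Type*} [Field 𝕜] [LinearOrder 𝕜]
    [IsStrictOrderedRing 𝕜] [AddCommGroup V] [Module 𝕜 V] {E : V → 𝕜} {a : V}
    {L : V →ₗ[𝕜] 𝕜} {Q : QuadraticForm 𝕜 V} (hQ : ∀ h, 0 ≤ Q h)
    (hE : ∀ h, E (a + h) = E a + L h + Q h) : (∀ b, E a ≤ E b) ↔ L = 0 := by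
  constructor
  · intro hmin
    ext h
    have hnonneg (t : 𝕜) : 0 ≤ Q h * (t * t) + L h * t + 0 := by
      have hle := hmin (a + t • h)
      rw [hE, map_smul, QuadraticMap.map_smul, smul_eq_mul, smul_eq_mul] at hle
      linarith
    have hdiscrim := discrim_le_zero hnonneg
    rw [discrim, mul_zero, sub_zero] at hdiscrim
    exact (pow_eq_zero_iff two_ne_zero).mp (hdiscrim.antisymm (sq_nonneg _))
  · rintro rfl b
    have hb := hE (b - a)
    rw [add_sub_cancel, LinearMap.zero_apply, add_zero] at hb
    exact hb ▸ le_add_of_nonneg_right (hQ _)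

section Frobenius

/-- The Frobenius inner product `frob` as a bilinear form. -/
noncomputable def frobForm (d : ℕ) : LinearMap.BilinForm ℝ (Matrix (Fin d) (Fin d) ℝ) :=
  LinearMap.mk₂ ℝ frob
    (fun A B C => by simp [frob, add_mul])
    (fun t A B => by simp [frob])
    (fun A B C => by simp [frob, mul_add])
    (fun t A B => by simp [frob])

variable {d : ℕ}

theorem frobForm_apply (A B : Matrix (Fin d) (Fin d) ℝ) : frobForm d A B = frob A B := rfl

theorem frob_comm (A B : Matrix (Fin d) (Fin d) ℝ) : frob A B = frob B A := by
  rw [frob, ← trace_transpose, transpose_mul, transpose_transpose, frob]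

theorem frob_transpose_left (A B : Matrix (Fin d) (Fin d) ℝ) : frob Aᵀ B = frob A Bᵀ := by
  rw [frob, frob, ← transpose_mul, trace_transpose, trace_mul_comm, transpose_transpose]

theorem frob_symPart_left (A : Matrix (Fin d) (Fin d) ℝ) {S : Matrix (Fin d) (Fin d) ℝ}
    (hS : Sᵀ = S) : frob (symPart A) S = frob A S := by
  rw [symPart, ← frobForm_apply, map_smul, map_add, LinearMap.smul_apply, LinearMap.add_apply,
    frobForm_apply, frobForm_apply, frob_transpose_left, hS, smul_eq_mul]
  ring

theorem frob_vecMulVec_left (a n : Fin d → ℝ) (S : Matrix (Fin d) (Fin d) ℝ) :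
    frob (vecMulVec a n) S = a ⬝ᵥ S *ᵥ n := by
  rw [frob, vecMulVec_mul, trace_vecMulVec, vecMul_transpose]

theorem symPart_transpose (A : Matrix (Fin d) (Fin d) ℝ) : (symPart A)ᵀ = symPart A := by
  rw [symPart, transpose_smul, transpose_add, transpose_transpose, add_comm]

/-- The symmetrized rank-one strain `(a ⊗ n)ˢʸᵐ`, as a linear function of `a`. -/
noncomputable def symDyad (n : Fin d → ℝ) : (Fin d → ℝ) →ₗ[ℝ] Matrix (Fin d) (Fin d) ℝ where
  toFun a := symPart (vecMulVec a n)
  map_add' a b := by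
    simp only [symPart, add_vecMulVec, transpose_add]
    module
  map_smul' t a := by
    simp only [symPart, smul_vecMulVec, transpose_smul, RingHom.id_apply]
    module

theorem symDyad_apply (n a : Fin d → ℝ) : symDyad n a = symPart (vecMulVec a n) := rfl

theorem frob_symDyad_left (n a : Fin d → ℝ) {S : Matrix (Fin d) (Fin d) ℝ} (hS : Sᵀ = S) :
    frob (symDyad n a) S = a ⬝ᵥ S *ᵥ n := by
  rw [symDyad_apply, frob_symPart_left _ hS, frob_vecMulVec_left]

end Frobenius

section Stiffness

variable {d : ℕ} {C : Matrix (Fin d) (Fin d) ℝ →ₗ[ℝ] Matrix (Fin d) (Fin d) ℝ}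

theorem frob_map_add_smul (hC : ∀ A B, frob (C A) B = frob A (C B))
    (X W : Matrix (Fin d) (Fin d) ℝ) (t : ℝ) :
    frob (X + t • W) (C (X + t • W)) =
      frob X (C X) + 2 * t * frob W (C X) + t ^ 2 * frob W (C W) := by
  have hcross : frob X (C W) = frob W (C X) := by rw [← hC, frob_comm]
  simp only [← frobForm_apply, map_add, map_smul, LinearMap.add_apply, LinearMap.smul_apply,
    smul_eq_mul] at hcross ⊢
  rw [hcross]
  ring

/-- A possibly degenerate stiffness tensor: it is self-adjoint with symmetric values, but only
positive semidefinite, so that some symmetric strains may cost no energy. Semidefiniteness is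
required on all matrices; as `⟨A, C A⟩ = ⟨Aˢʸᵐ, C Aˢʸᵐ⟩`, this is the same as on symmetric ones. -/
structure IsPosSemidefStiffness
    (C : Matrix (Fin d) (Fin d) ℝ →ₗ[ℝ] Matrix (Fin d) (Fin d) ℝ) : Prop where
  selfAdjoint : ∀ A B, frob (C A) B = frob A (C B)
  transpose_map : ∀ A, (C A)ᵀ = C A
  nonneg : ∀ A, 0 ≤ frob A (C A)

theorem IsStiffness.isPosSemidefStiffness (hC : IsStiffness C) : IsPosSemidefStiffness C := by
  obtain ⟨hself, hsymPart, htranspose, hpos⟩ := hC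
  refine ⟨hself, htranspose, fun A => ?_⟩
  rw [← frob_symPart_left A (htranspose A), hsymPart A]
  by_cases hA : symPart A = 0
  · rw [hA, map_zero, ← frobForm_apply, map_zero]
  · exact (hpos _ (symPart_transpose A) hA).le

end Stiffness

section PairwiseStrains

variable {d : ℕ} {φα φβ : ℝ}

theorem strainBA_sub_strainAB (hs : φα + φβ ≠ 0) (G : Matrix (Fin d) (Fin d) ℝ)
    (n a : Fin d → ℝ) :
    strainBA φα φβ G n a - strainAB φα φβ G n a = symPart (vecMulVec a n) := by
  rw [strainBA, strainAB, ← smul_sub, inv_smul_eq_iff₀ hs]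
  module

theorem smul_strainAB_add_smul_strainBA (hs : φα + φβ ≠ 0) (G : Matrix (Fin d) (Fin d) ℝ)
    (n a : Fin d → ℝ) :
    φα • strainAB φα φβ G n a + φβ • strainBA φα φβ G n a = G := by
  rw [strainBA, strainAB, smul_comm φα, smul_comm φβ, ← smul_add, inv_smul_eq_iff₀ hs]
  module

theorem strainAB_add (φα φβ : ℝ) (G : Matrix (Fin d) (Fin d) ℝ) (n a h : Fin d → ℝ) :
    strainAB φα φβ G n (a + h) =
      strainAB φα φβ G n a + (-(φβ / (φα + φβ))) • symDyad n h := by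
  simp only [strainAB, ← symDyad_apply, map_add]
  module

theorem strainBA_add (φα φβ : ℝ) (G : Matrix (Fin d) (Fin d) ℝ) (n a h : Fin d → ℝ) :
    strainBA φα φβ G n (a + h) =
      strainBA φα φβ G n a + (φα / (φα + φβ)) • symDyad n h := by
  simp only [strainBA, ← symDyad_apply, map_add]
  module

end PairwiseStrains

section PairwiseEnergy

variable {d : ℕ} {Cα Cβ : Matrix (Fin d) (Fin d) ℝ →ₗ[ℝ] Matrix (Fin d) (Fin d) ℝ}
  {φα φβ : ℝ}

/-- The jump `σ_{βα}(a) n − σ_{αβ}(a) n` of the traction across the pairwise interface. -/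
noncomputable def tractionJump
    (Cα Cβ : Matrix (Fin d) (Fin d) ℝ →ₗ[ℝ] Matrix (Fin d) (Fin d) ℝ)
    (εαB εβB : Matrix (Fin d) (Fin d) ℝ) (φα φβ : ℝ) (G : Matrix (Fin d) (Fin d) ℝ)
    (n a : Fin d → ℝ) : Fin d → ℝ :=
  Cβ (strainBA φα φβ G n a - εβB) *ᵥ n - Cα (strainAB φα φβ G n a - εαB) *ᵥ n

/-- The second-order part `h ↦ (φ_α φ_β / 2s²) ⟨W, C̄ W⟩` of the pairwise energy, where
`W = (h ⊗ n)ˢʸᵐ` and `C̄ = (φ_β / s) C_α + (φ_α / s) C_β`. -/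
noncomputable def pairCurvature
    (Cα Cβ : Matrix (Fin d) (Fin d) ℝ →ₗ[ℝ] Matrix (Fin d) (Fin d) ℝ) (φα φβ : ℝ)
    (n : Fin d → ℝ) : QuadraticForm ℝ (Fin d → ℝ) :=
  (φα / (φα + φβ) * (φβ / (φα + φβ)) / 2) •
    (LinearMap.BilinMap.toQuadraticMap ((frobForm d).compRight
      ((φβ / (φα + φβ)) • Cα + (φα / (φα + φβ)) • Cβ))).comp (symDyad n)

theorem pairCurvature_apply
    (Cα Cβ : Matrix (Fin d) (Fin d) ℝ →ₗ[ℝ] Matrix (Fin d) (Fin d) ℝ) (φα φβ : ℝ)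
    (n h : Fin d → ℝ) :
    pairCurvature Cα Cβ φα φβ n h = φα / (φα + φβ) * (φβ / (φα + φβ)) / 2 *
      (φβ / (φα + φβ) * frob (symDyad n h) (Cα (symDyad n h)) +
        φα / (φα + φβ) * frob (symDyad n h) (Cβ (symDyad n h))) := by
  simp only [pairCurvature, _root_.smul_apply, QuadraticMap.comp_apply,
    LinearMap.BilinMap.toQuadraticMap_apply, LinearMap.BilinForm.compRight_apply,
    LinearMap.add_apply, LinearMap.smul_apply, map_add, map_smul, frobForm_apply, smul_eq_mul]

theorem pairCurvature_nonneg (hφα : 0 ≤ φα) (hφβ : 0 ≤ φβ) (hCα : IsPosSemidefStiffness Cα)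
    (hCβ : IsPosSemidefStiffness Cβ) (n h : Fin d → ℝ) :
    0 ≤ pairCurvature Cα Cβ φα φβ n h := by
  have hα := hCα.nonneg (symDyad n h)
  have hβ := hCβ.nonneg (symDyad n h)
  rw [pairCurvature_apply]
  positivity

theorem pairE_add (hCα : IsPosSemidefStiffness Cα) (hCβ : IsPosSemidefStiffness Cβ)
    (εαB εβB : Matrix (Fin d) (Fin d) ℝ) (φα φβ : ℝ) (G : Matrix (Fin d) (Fin d) ℝ)
    (n a h : Fin d → ℝ) :
    pairE Cα Cβ εαB εβB φα φβ G n (a + h) =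
      pairE Cα Cβ εαB εβB φα φβ G n a +
        φα / (φα + φβ) * (φβ / (φα + φβ)) * (tractionJump Cα Cβ εαB εβB φα φβ G n a ⬝ᵥ h) +
        pairCurvature Cα Cβ φα φβ n h := by
  rw [pairE, strainAB_add, strainBA_add, add_sub_right_comm, add_sub_right_comm,
    frob_map_add_smul hCα.selfAdjoint, frob_map_add_smul hCβ.selfAdjoint,
    frob_symDyad_left n h (hCα.transpose_map (strainAB φα φβ G n a - εαB)),
    frob_symDyad_left n h (hCβ.transpose_map (strainBA φα φβ G n a - εβB)),
    pairCurvature_apply, dotProduct_comm _ h, tractionJump, dotProduct_sub, pairE]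
  ring

theorem forall_pairE_le_iff_tractionJump_eq_zero (hφα : 0 < φα) (hφβ : 0 < φβ)
    (hCα : IsPosSemidefStiffness Cα) (hCβ : IsPosSemidefStiffness Cβ)
    (εαB εβB G : Matrix (Fin d) (Fin d) ℝ) (n a : Fin d → ℝ) :
    (∀ b, pairE Cα Cβ εαB εβB φα φβ G n a ≤ pairE Cα Cβ εαB εβB φα φβ G n b) ↔
      tractionJump Cα Cβ εαB εβB φα φβ G n a = 0 := by
  have hk : φα / (φα + φβ) * (φβ / (φα + φβ)) ≠ 0 := by positivity
  rw [forall_le_iff_linear_part_eq_zero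
      (L := (φα / (φα + φβ) * (φβ / (φα + φβ))) •
        dotProductEquiv ℝ (Fin d) (tractionJump Cα Cβ εαB εβB φα φβ G n a))
      (pairCurvature_nonneg hφα.le hφβ.le hCα hCβ n)
      (pairE_add hCα hCβ εαB εβB φα φβ G n a),
    smul_eq_zero_iff_right hk, LinearEquiv.map_eq_zero_iff]

end PairwiseEnergy

theorem pairwise_relaxation_satisfies_both_jump_conditions_general {d : ℕ}
    {φα φβ : ℝ} (hφα : 0 < φα) (hφβ : 0 < φβ)
    (G : Matrix (Fin d) (Fin d) ℝ) (nh : Fin d → ℝ)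
    {Cα Cβ : Matrix (Fin d) (Fin d) ℝ →ₗ[ℝ] Matrix (Fin d) (Fin d) ℝ}
    (hCα : IsPosSemidefStiffness Cα) (hCβ : IsPosSemidefStiffness Cβ)
    (εαB εβB : Matrix (Fin d) (Fin d) ℝ) :
    (∀ a : Fin d → ℝ,
      (∀ b, pairE Cα Cβ εαB εβB φα φβ G nh a ≤ pairE Cα Cβ εαB εβB φα φβ G nh b) ↔
        (Cα (strainAB φα φβ G nh a - εαB)).mulVec nh
          = (Cβ (strainBA φα φβ G nh a - εβB)).mulVec nh) ∧
    (∀ a : Fin d → ℝ,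
      strainBA φα φβ G nh a - strainAB φα φβ G nh a = symPart (vecMulVec a nh)) ∧
    (∀ a : Fin d → ℝ,
      φα • strainAB φα φβ G nh a + φβ • strainBA φα φβ G nh a = G) := by
  have hs : φα + φβ ≠ 0 := (add_pos hφα hφβ).ne'
  refine ⟨fun a => ?_, strainBA_sub_strainAB hs G nh, smul_strainAB_add_smul_strainBA hs G nh⟩
  rw [forall_pairE_le_iff_tractionJump_eq_zero hφα hφβ hCα hCβ, tractionJump, sub_eq_zero, eq_comm]

/-- stationarity of the pairwise interface energy is equivalent to both jump
conditions for Hooke materials: `a` minimizes `E` iff `σ_{αβ}(a) n̂ = σ_{βα}(a) n̂`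
(static equilibrium), and for every `a` the pairwise strains automatically satisfy the
Hadamard condition `ε_{βα}(a) − ε_{αβ}(a) = (a ⊗ n̂)ˢʸᵐ` and the average constraint
`φ_α ε_{αβ}(a) + φ_β ε_{βα}(a) = G`. -/
theorem pairwise_relaxation_satisfies_both_jump_conditions {d : ℕ}
    (φα φβ : ℝ) (hφα : 0 < φα) (hφβ : 0 < φβ)
    (G : Matrix (Fin d) (Fin d) ℝ) (hG : Gᵀ = G)
    (nh : Fin d → ℝ) (hnh : nh ⬝ᵥ nh = 1)
    (Cα Cβ : Matrix (Fin d) (Fin d) ℝ →ₗ[ℝ] Matrix (Fin d) (Fin d) ℝ)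
    (hCα : IsStiffness Cα) (hCβ : IsStiffness Cβ)
    (εαB εβB : Matrix (Fin d) (Fin d) ℝ) (hεαB : εαBᵀ = εαB) (hεβB : εβBᵀ = εβB) :
    (∀ a : Fin d → ℝ,
      (∀ b, pairE Cα Cβ εαB εβB φα φβ G nh a ≤ pairE Cα Cβ εαB εβB φα φβ G nh b) ↔
        (Cα (strainAB φα φβ G nh a - εαB)).mulVec nh
          = (Cβ (strainBA φα φβ G nh a - εβB)).mulVec nh) ∧
    (∀ a : Fin d → ℝ,
      strainBA φα φβ G nh a - strainAB φα φβ G nh a = symPart (vecMulVec a nh)) ∧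
    (∀ a : Fin d → ℝ,
      φα • strainAB φα φβ G nh a + φβ • strainBA φα φβ G nh a = G) :=
  pairwise_relaxation_satisfies_both_jump_conditions_general hφα hφβ G nh
    hCα.isPosSemidefStiffness hCβ.isPosSemidefStiffness εαB εβB
end
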